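/- Let K be a field, F ∈ K[x]^{m×n}, and s ∈ ℕ^m such that there exists a basis of ker(F) with nonpositive −s-row degree. Let μ ∈ ℤ_{>0} with μ > max(s), let d ∈ ℤ_{>0}^n with d ≥ cdeg_s(F) + 1 entrywise, let n̄ be the parameter of the overlapping linearization of F with respect to d and μ, and let t = (s, μ−1, …, μ−1) ∈ ℕ^{m+n̄}. Let P ∈ K[x]^{(m+n̄)×(m+n̄)} be a basis of App_{L_μ(d)}(L_{d,μ}(F)) in −t-reduced form. Then exactly k = m − rank(F) rows of P have nonpositive −t-row degree, and the matrix K ∈ K[x]^{k×m} formed by the first m columns of these rows is a basis of ker(F) in −s-reduced form. Moreover, if P is in −t-weak Popov form, then K is in −s-weak Popov form. -/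

import Mathlib

open Polynomial Matrix

/-- The degree of a polynomial, viewed in `ℤ ∪ {-∞}`. -/
noncomputable def degZ {K : Type*} [Field K] (p : K[X]) : WithBot ℤ :=
  p.degree.map fun a : ℕ => (a : ℤ)

/-- The `s`-row degree of a (row) vector of polynomials. -/
noncomputable def rdegRow {K : Type*} [Field K] {ν : Type*} [Fintype ν]
    (s : ν → ℤ) (v : ν → K[X]) : WithBot ℤ :=
  Finset.univ.sup fun j => degZ (v j) + (s j : WithBot ℤ)

/-- The `s`-row degree of a polynomial matrix. -/
noncomputable def rdeg {K : Type*} [Field K] {ι ν : Type*} [Fintype ν]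
    (s : ν → ℤ) (P : Matrix ι ν K[X]) : ι → WithBot ℤ :=
  fun i => rdegRow s (P i)

/-- The `t`-column degree of a polynomial matrix. -/
noncomputable def cdeg {K : Type*} [Field K] {ι ν : Type*} [Fintype ι]
    (t : ι → ℤ) (P : Matrix ι ν K[X]) : ν → WithBot ℤ :=
  fun j => Finset.univ.sup fun i => degZ (P i j) + (t i : WithBot ℤ)

/-- Coefficient of integer degree `d` of a polynomial (0 if `d < 0`). -/
noncomputable def coeffZ {K : Type*} [Field K] (p : K[X]) (d : ℤ) : K :=
  if 0 ≤ d then p.coeff d.toNat else 0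

/-- The `s`-leading matrix of a polynomial matrix. -/
noncomputable def lm {K : Type*} [Field K] {ι ν : Type*} [Fintype ν]
    (s : ν → ℤ) (P : Matrix ι ν K[X]) : Matrix ι ν K :=
  Matrix.of fun i j =>
    (rdeg s P i).recBotCoe 0 fun t => coeffZ (P i j) (t - s j)

/-- `P` is in `s`-reduced form: its `s`-leading matrix has full row rank,
i.e. its rows are linearly independent over `K`. -/
def IsReducedForm {K : Type*} [Field K] {ι ν : Type*} [Fintype ν]
    (s : ν → ℤ) (P : Matrix ι ν K[X]) : Prop :=
  LinearIndependent K fun i => lm s P i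

open Classical in
/-- The `s`-pivot index of a row vector: the largest column index where the
`s`-row degree is attained (with a nonzero entry); `⊥` for the zero row. -/
noncomputable def piv {K : Type*} [Field K] {ν : Type*} [Fintype ν] [LinearOrder ν]
    (s : ν → ℤ) (v : ν → K[X]) : WithBot ν :=
  (Finset.univ.filter fun j => v j ≠ 0 ∧ degZ (v j) + (s j : WithBot ℤ) = rdegRow s v).max

/-- The `s`-pivot degree of a row vector (junk value `0` for the zero row). -/
noncomputable def pivDeg {K : Type*} [Field K] {ν : Type*} [Fintype ν] [LinearOrder ν]
    (s : ν → ℤ) (v : ν → K[X]) : ℕ :=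
  ((piv s v).map fun j => (v j).natDegree).unbotD 0

/-- `P` is in `s`-weak Popov form: no zero row and strictly increasing `s`-pivot indices. -/
def IsWeakPopov {K : Type*} [Field K] {ι ν : Type*} [Fintype ν] [LinearOrder ν] [Preorder ι]
    (s : ν → ℤ) (P : Matrix ι ν K[X]) : Prop :=
  (∀ i, piv s (P i) ≠ ⊥) ∧ StrictMono fun i => piv s (P i)

/-- `P` is in `s`-unordered weak Popov form: no zero row and pairwise distinct
`s`-pivot indices. -/
def IsUWeakPopov {K : Type*} [Field K] {ι ν : Type*} [Fintype ν] [LinearOrder ν]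
    (s : ν → ℤ) (P : Matrix ι ν K[X]) : Prop :=
  (∀ i, piv s (P i) ≠ ⊥) ∧ Function.Injective fun i => piv s (P i)

/-- `P` is in `s`-Popov form: `s`-weak Popov, monic pivots, and each pivot entry
has degree strictly larger than the other entries of its column. -/
def IsPopov {K : Type*} [Field K] {ι ν : Type*} [Fintype ν] [LinearOrder ν] [Preorder ι]
    (s : ν → ℤ) (P : Matrix ι ν K[X]) : Prop :=
  IsWeakPopov s P ∧
    ∀ i (j : ν), piv s (P i) = (j : WithBot ν) →
      (P i j).Monic ∧ ∀ i', i' ≠ i → (P i' j).degree < (P i j).degree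

/-- The row space of a polynomial matrix. -/
noncomputable def rowSpace {K : Type*} [Field K] {ι ν : Type*} (P : Matrix ι ν K[X]) :
    Submodule K[X] (ν → K[X]) :=
  Submodule.span K[X] (Set.range fun i => P i)

/-- The rows of `B` form a basis of the module `M`. -/
def IsBasisOf {K : Type*} [Field K] {ι ν : Type*} (B : Matrix ι ν K[X])
    (M : Submodule K[X] (ν → K[X])) : Prop :=
  LinearIndependent K[X] (fun i => B i) ∧
    Submodule.span K[X] (Set.range fun i => B i) = M

/-- The left kernel of a polynomial matrix. -/
noncomputable def leftKernel {K : Type*} [Field K] {ι ν : Type*} [Fintype ι]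
    (F : Matrix ι ν K[X]) : Submodule K[X] (ι → K[X]) :=
  LinearMap.ker F.vecMulLinear

/-! ### Overlapping partial linearization (Definition 5.8) -/

/-- `α_i = ⌈d_i/μ − 1⌉`, i.e. the unique `a ≥ 0` with `1 ≤ d_i − aμ ≤ μ`. -/
def ovlα (μ : ℕ) {n : ℕ} (d : Fin n → ℕ) (i : Fin n) : ℕ := (d i - 1) / μ

/-- `β_i = d_i − α_i μ`, so that `1 ≤ β_i ≤ μ` when `d_i ≥ 1`. -/
def ovlβ (μ : ℕ) {n : ℕ} (d : Fin n → ℕ) (i : Fin n) : ℕ := d i - ovlα μ d i * μ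

/-- Length of the `i`-th column block of the overlapping linearization:
`α_i` if `α_i > 1`, else `1`. -/
def ovlγ (μ : ℕ) {n : ℕ} (d : Fin n → ℕ) (i : Fin n) : ℕ := max (ovlα μ d i) 1

/-- Column index set of the overlapping linearization, of cardinality `n + n̄`. -/
abbrev OvlCol (μ : ℕ) {n : ℕ} (d : Fin n → ℕ) := Lex ((i : Fin n) × Fin (ovlγ μ d i))

/-- Index set for the `n̄` extra rows of the overlapping linearization. -/
abbrev OvlRowExtra (μ : ℕ) {n : ℕ} (d : Fin n → ℕ) := Lex ((i : Fin n) × Fin (ovlα μ d i - 1))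

/-- Row index set of the overlapping linearization, of cardinality `m + n̄`. -/
abbrev OvlRow (m : ℕ) (μ : ℕ) {n : ℕ} (d : Fin n → ℕ) := Fin m ⊕ₗ OvlRowExtra μ d

/-- The `k`-th `x^μ`-adic digit of a polynomial. -/
noncomputable def ovlDigit {K : Type*} [Field K] (μ k : ℕ) (p : K[X]) : K[X] :=
  ∑ e ∈ Finset.range μ, Polynomial.C (p.coeff (k * μ + e)) * Polynomial.X ^ e

/-- The expanded order tuple `L_μ(d)`: block `i` is `(2μ,…,2μ, μ+β_i)` if
`α_i > 1`, and `(d_i)` otherwise. -/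
def ovlOrder (μ : ℕ) {n : ℕ} (d : Fin n → ℕ) (c : OvlCol μ d) : ℕ :=
  if ovlα μ d (ofLex c).1 ≤ 1 then d (ofLex c).1
  else if ((ofLex c).2 : ℕ) = ovlγ μ d (ofLex c).1 - 1 then μ + ovlβ μ d (ofLex c).1
  else 2 * μ

/-- The overlapping linearization `L_{d,μ}(F)`: top block has column blocks
`[F_i^{(0)}+F_i^{(1)}x^μ | ⋯ | F_i^{(α_i−1)}+F_i^{(α_i)}x^μ]` (or `F_{·,i}`
when `α_i ≤ 1`), bottom block is `diag(J_1,…,J_n)` with `J_i = [0 | I]`. -/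
noncomputable def ovlL (K : Type*) [Field K] (μ : ℕ) {m n : ℕ} (d : Fin n → ℕ)
    (F : Matrix (Fin m) (Fin n) K[X]) :
    Matrix (OvlRow m μ d) (OvlCol μ d) K[X] :=
  Matrix.of fun r c =>
    Sum.elim
      (fun a : Fin m =>
        if ovlα μ d (ofLex c).1 ≤ 1 then F a (ofLex c).1
        else ovlDigit μ ((ofLex c).2 : ℕ) (F a (ofLex c).1) +
          ovlDigit μ (((ofLex c).2 : ℕ) + 1) (F a (ofLex c).1) * Polynomial.X ^ μ)
      (fun b : OvlRowExtra μ d =>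
        if (ofLex b).1 = (ofLex c).1 ∧ ((ofLex c).2 : ℕ) = ((ofLex b).2 : ℕ) + 1 then 1 else 0)
      (ofLex r)

/-- The module of approximants `App_{ord}(L)`: row vectors `p` with
`p · (column c of L) ≡ 0 mod x^{ord c}` for all `c`. -/
noncomputable def appMod {K : Type*} [Field K] {ι κ : Type*} [Fintype ι]
    (ord : κ → ℕ) (L : Matrix ι κ K[X]) : Submodule K[X] (ι → K[X]) :=
  Submodule.comap L.vecMulLinear
    (Submodule.pi Set.univ fun c => Ideal.span {(Polynomial.X : K[X]) ^ ord c})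

section RankHelpers

lemma ovl_rank_map {R : Type*} [CommRing R] [IsDomain R] {m n : Type*} [Fintype m] [Fintype n]
    (A : Matrix m n R) :
    (A.map (algebraMap R (FractionRing R))).rank = A.rank := by
  classical
  rw [Matrix.rank_eq_finrank_span_cols, Matrix.rank_eq_finrank_span_cols]
  let f : (m → R) →ₗ[R] (m → FractionRing R) :=
    LinearMap.pi fun i => (Algebra.linearMap R (FractionRing R)).comp (LinearMap.proj i)
  have : IsLocalizedModule (nonZeroDivisors R) f := by
    exact IsLocalizedModule.pi (nonZeroDivisors R) (fun _ : m => Algebra.linearMap R (FractionRing R))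
  have h := Submodule.localized'_span (FractionRing R) (nonZeroDivisors R) f (Set.range A.col)
  have e : f '' Set.range A.col = Set.range (A.map (algebraMap R (FractionRing R))).col := by
    rw [← Set.range_comp]
    rfl
  rw [← e, ← h]
  rw [IsLocalization.finrank_eq (FractionRing R) (nonZeroDivisors R) le_rfl]
  exact IsLocalizedModule.finrank_eq (nonZeroDivisors R)
    ((Submodule.span R (Set.range A.col)).toLocalized' (FractionRing R) (nonZeroDivisors R) f) le_rfl

lemma ovl_rank_transpose {R : Type*} [CommRing R] [IsDomain R] {m n : Type*} [Fintype m]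
    [Fintype n] (A : Matrix m n R) : Aᵀ.rank = A.rank := by
  rw [← ovl_rank_map, ← ovl_rank_map A, Matrix.transpose_map, Matrix.rank_transpose]

lemma ovl_finrank_ker {K : Type*} [Field K] {m n : ℕ} (F : Matrix (Fin m) (Fin n) K[X]) :
    Module.finrank K[X] (leftKernel F) = m - F.rank := by
  have h1 := (leftKernel F).finrank_quotient_add_finrank
  have h2 : Module.finrank K[X] ((Fin m → K[X]) ⧸ leftKernel F) = F.rank := by
    have e := F.vecMulLinear.quotKerEquivRange.finrank_eq
    rw [leftKernel, e, ← ovl_rank_transpose F, Matrix.rank, Matrix.mulVecLin_transpose]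
  rw [h2, Module.finrank_fin_fun] at h1
  omega

end RankHelpers
section DegHelpers

variable {K : Type*} [Field K]

/-- degree bound by an integer -/
def DZ (p : K[X]) (a : ℤ) : Prop := ∀ k : ℕ, a < k → p.coeff k = 0

lemma degZ_le_iff (p : K[X]) (a : ℤ) : degZ p ≤ (a : WithBot ℤ) ↔ DZ p a := by
  unfold degZ DZ
  by_cases hp : p = 0
  · simp [hp]
  · rw [Polynomial.degree_eq_natDegree hp]
    change (((p.natDegree : ℕ) : ℤ) : WithBot ℤ) ≤ _ ↔ _
    rw [WithBot.coe_le_coe]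
    constructor
    · intro h k hk
      exact Polynomial.coeff_eq_zero_of_natDegree_lt (by omega)
    · intro h
      by_contra hc
      have := h p.natDegree (by omega)
      exact hp (by simpa using this)

lemma DZ.mono {p : K[X]} {a b : ℤ} (h : DZ p a) (hab : a ≤ b) : DZ p b :=
  fun k hk => h k (by omega)

lemma DZ.zero (a : ℤ) : DZ (0 : K[X]) a := fun _ _ => by simp

lemma DZ.add {p q : K[X]} {a : ℤ} (hp : DZ p a) (hq : DZ q a) : DZ (p + q) a := by
  intro k hk
  rw [Polynomial.coeff_add, hp k hk, hq k hk, add_zero]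

lemma DZ.sum {ι : Type*} (S : Finset ι) {f : ι → K[X]} {a : ℤ} (h : ∀ i ∈ S, DZ (f i) a) :
    DZ (∑ i ∈ S, f i) a := by
  intro k hk
  rw [Polynomial.finsetSum_coeff]
  exact Finset.sum_eq_zero fun i hi => h i hi k hk

lemma DZ.mul {p q : K[X]} {a b : ℤ} (hp : DZ p a) (hq : DZ q b) : DZ (p * q) (a + b) := by
  intro k hk
  rw [Polynomial.coeff_mul]
  refine Finset.sum_eq_zero fun x hx => ?_
  rw [Finset.HasAntidiagonal.mem_antidiagonal] at hx
  by_cases h : a < x.1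
  · rw [hp _ h, zero_mul]
  · rw [hq _ (by omega), mul_zero]

lemma DZ.eq_zero {p : K[X]} {a : ℤ} (hp : DZ p a) (ha : a < 0) : p = 0 := by
  ext k
  simpa using hp k (by omega)

lemma DZ.natDegree {p : K[X]} : DZ p p.natDegree :=
  fun k hk => Polynomial.coeff_eq_zero_of_natDegree_lt (by omega)

lemma DZ.eq_zero_of_dvd {p : K[X]} {a : ℤ} {e : ℕ} (hp : DZ p a) (ha : a < e)
    (hd : (X : K[X]) ^ e ∣ p) : p = 0 := by
  rw [Polynomial.X_pow_dvd_iff] at hd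
  ext k
  by_cases h : k < e
  · simpa using hd k h
  · simpa using hp k (by omega)

lemma DZ.mul_X_pow {p : K[X]} {a : ℤ} (hp : DZ p a) (e : ℕ) : DZ (p * X ^ e) (a + e) := by
  refine hp.mul fun k hk => ?_
  rw [Polynomial.coeff_X_pow, if_neg (by omega)]

lemma DZ.of_mul_X_pow {p : K[X]} {a : ℤ} {e : ℕ} (hp : DZ (p * X ^ e) (a + e)) : DZ p a := by
  intro k hk
  have := hp (k + e) (by push_cast; omega)
  rwa [Polynomial.coeff_mul_X_pow] at this

lemma coeffZ_mul {p q : K[X]} {a b : ℤ} (hp : DZ p a) (hq : DZ q b) :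
    coeffZ (p * q) (a + b) = coeffZ p a * coeffZ q b := by
  by_cases ha : a < 0
  · rw [hp.eq_zero ha]; simp [coeffZ]
  by_cases hb : b < 0
  · rw [hq.eq_zero hb]; simp [coeffZ]
  lift a to ℕ using (by omega)
  lift b to ℕ using (by omega)
  unfold coeffZ
  rw [if_pos (by omega), if_pos (by omega), if_pos (by omega)]
  have e : ((a : ℤ) + b).toNat = a + b := by omega
  rw [e, Int.toNat_natCast, Int.toNat_natCast]
  apply Polynomial.coeff_mul_add_eq_of_natDegree_le
  · rw [Polynomial.natDegree_le_iff_coeff_eq_zero]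
    intro k hk; exact hp k (by omega)
  · rw [Polynomial.natDegree_le_iff_coeff_eq_zero]
    intro k hk; exact hq k (by omega)

lemma coeffZ_sum {ι : Type*} (S : Finset ι) (f : ι → K[X]) (a : ℤ) :
    coeffZ (∑ i ∈ S, f i) a = ∑ i ∈ S, coeffZ (f i) a := by
  unfold coeffZ
  split_ifs
  · rw [Polynomial.finsetSum_coeff]
  · simp

lemma coeffZ_of_DZ {p : K[X]} {a b : ℤ} (hp : DZ p a) (h : a < b) : coeffZ p b = 0 := by
  unfold coeffZ
  split_ifs
  · exact hp _ (by omega)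
  · rfl

lemma rdegRow_le_iff {ν : Type*} [Fintype ν] (s : ν → ℤ) (v : ν → K[X]) (N : ℤ) :
    rdegRow s v ≤ (N : WithBot ℤ) ↔ ∀ j, DZ (v j) (N - s j) := by
  unfold rdegRow
  rw [Finset.sup_le_iff]
  refine ⟨fun h j => ?_, fun h j _ => ?_⟩
  · rw [← degZ_le_iff]
    have := h j (Finset.mem_univ _)
    revert this
    cases degZ (v j) with
    | bot => simp
    | coe x =>
      rw [← WithBot.coe_add, WithBot.coe_le_coe, WithBot.coe_le_coe]; omega
  · have := (degZ_le_iff _ _).2 (h j)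
    revert this
    cases degZ (v j) with
    | bot => simp
    | coe x =>
      rw [← WithBot.coe_add, WithBot.coe_le_coe, WithBot.coe_le_coe]; omega

/-- Rows of a reduced matrix have a finite row degree. -/
lemma reduced_rdeg {ι ν : Type*} [Fintype ν] {s : ν → ℤ} {P : Matrix ι ν K[X]}
    (hP : IsReducedForm s P) (i : ι) : ∃ ρ : ℤ, rdeg s P i = (ρ : WithBot ℤ) := by
  have h := hP.ne_zero i
  cases hr : rdeg s P i with
  | bot =>
    exfalso; apply h
    funext j
    simp [lm, hr]
  | coe x => exact ⟨x, rfl⟩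

/-- Predictable degree property. -/
lemma predictable_degree {ι ν : Type*} [Fintype ι] [Fintype ν] {s : ν → ℤ} {P : Matrix ι ν K[X]}
    (hP : IsReducedForm s P) (ρ : ι → ℤ) (hρ : ∀ i, rdeg s P i = (ρ i : WithBot ℤ))
    (c : ι → K[X]) (N : ℤ) (hN : ∀ j, DZ ((∑ i, c i • P i) j) (N - s j)) (i : ι)
    (hi : c i ≠ 0) : ((c i).natDegree : ℤ) + ρ i ≤ N := by
  classical
  obtain ⟨i₀, hi₀, hmax⟩ := Finset.exists_max_image (Finset.univ.filter fun i => c i ≠ 0)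
    (fun i => ((c i).natDegree : ℤ) + ρ i) ⟨i, by simp [hi]⟩
  have hi₀' : c i₀ ≠ 0 := by simpa using hi₀
  refine (hmax i (by simp [hi])).trans ?_
  by_contra hc
  push Not at hc
  set M : ℤ := ((c i₀).natDegree : ℤ) + ρ i₀ with hM
  have hcd : ∀ i, DZ (c i) (M - ρ i) := by
    intro i
    by_cases h : c i = 0
    · rw [h]; exact DZ.zero _
    · have := hmax i (by simp [h])
      exact DZ.natDegree.mono (by omega)
  have hPd : ∀ i j, DZ (P i j) (ρ i - s j) := fun i =>
    (rdegRow_le_iff s (P i) (ρ i)).1 (le_of_eq (hρ i))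
  have hlm : ∀ i j, lm s P i j = coeffZ (P i j) (ρ i - s j) := by
    intro i j
    simp [lm, hρ i]
  have key : ∑ i, coeffZ (c i) (M - ρ i) • lm s P i = 0 := by
    funext j
    have h1 := coeffZ_of_DZ (hN j) (show N - s j < M - s j by omega)
    rw [Finset.sum_apply, coeffZ_sum] at h1
    rw [Finset.sum_apply, Pi.zero_apply, ← h1]
    refine Finset.sum_congr rfl fun i _ => ?_
    have := coeffZ_mul (hcd i) (hPd i j)
    rw [show M - ρ i + (ρ i - s j) = M - s j by ring] at this
    simp only [Pi.smul_apply, smul_eq_mul]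
    rw [this, hlm]
  have := Fintype.linearIndependent_iff.1 hP _ key i₀
  rw [show M - ρ i₀ = ((c i₀).natDegree : ℤ) by omega] at this
  simp [coeffZ] at this
  exact hi₀' this

lemma reduced_linearIndependent {ι ν : Type*} [Finite ι] [Fintype ν] {s : ν → ℤ}
    {P : Matrix ι ν K[X]} (hP : IsReducedForm s P) :
    LinearIndependent K[X] (fun i => P i) := by
  have := Fintype.ofFinite ι
  rw [Fintype.linearIndependent_iff]
  intro c hc i
  by_contra hi
  choose ρ hρ using reduced_rdeg hP
  have := predictable_degree hP ρ hρ c (ρ i - 1) (fun j => by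
    have e : ∑ i, c i • P i = 0 := hc
    rw [e]; exact DZ.zero _) i hi
  omega

end DegHelpers
section SeqHelpers

variable {K : Type*} [Field K]

lemma seq_forward (μ α β : ℕ) (hα : 2 ≤ α) (A q : ℕ → K[X]) (hq0 : q 0 = 0)
    (hA : ∀ c, DZ (A c) (2 * μ - 2)) (hq : ∀ c, DZ (q c) (μ - 1))
    (h : ∀ c, c < α - 1 → X ^ (2 * μ) ∣ A c + A (c + 1) * X ^ μ + q c)
    (hl : X ^ (μ + β) ∣ A (α - 1) + A (α - 1 + 1) * X ^ μ + q (α - 1)) :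
    (∀ c, c < α - 1 → q (c + 1) * X ^ μ = q c + A c) ∧
      X ^ (α * μ + β) ∣ ∑ c ∈ Finset.range (α + 1), A c * X ^ (c * μ) := by
  have hdiv : ∀ c, c ≤ α - 1 → (X : K[X]) ^ μ ∣ A c + A (c + 1) * X ^ μ + q c := by
    intro c hc
    rcases Nat.lt_or_ge c (α - 1) with h1 | h1
    · exact (pow_dvd_pow X (by omega)).trans (h c h1)
    · obtain rfl : c = α - 1 := by omega
      exact (pow_dvd_pow X (by omega)).trans hl
  have hdiv' : ∀ c, c ≤ α - 1 → (X : K[X]) ^ μ ∣ q c + A c := by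
    intro c hc
    have := dvd_sub (hdiv c hc) (Dvd.intro_left (A (c + 1)) rfl)
    convert this using 1
    ring
  have step : ∀ c, c < α - 1 → q (c + 1) * X ^ μ = q c + A c := by
    intro c hc
    obtain ⟨g, hg⟩ := hdiv' c (by omega)
    have hg2 : DZ g (μ - 1) := by
      apply DZ.of_mul_X_pow (e := μ)
      rw [mul_comm g, ← hg]
      by_cases hμ : μ = 0
      · subst hμ
        have h1 := (hA c).eq_zero (by norm_num)
        have h2 := (hq c).eq_zero (by norm_num)
        rw [h1, h2, add_zero]; exact DZ.zero _
      exact ((hq c).mono (by omega)).add ((hA c).mono (by omega))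
    have h1 : (X : K[X]) ^ μ ∣ g + A (c + 1) := by
      have h2 := h c hc
      rw [show A c + A (c + 1) * X ^ μ + q c = X ^ μ * (g + A (c + 1)) by
        rw [mul_add, ← hg]; ring, two_mul, pow_add] at h2
      exact (mul_dvd_mul_iff_left (pow_ne_zero _ Polynomial.X_ne_zero)).1 h2
    have h3 := dvd_sub (hdiv' (c + 1) (by omega)) h1
    have h4 : q (c + 1) + A (c + 1) - (g + A (c + 1)) = 0 := by
      refine DZ.eq_zero_of_dvd (a := (μ : ℤ) - 1) ?_ (by omega) h3
      intro k hk
      have e1 := hq (c + 1) k hk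
      have e2 := hg2 k hk
      simp only [Polynomial.coeff_sub, Polynomial.coeff_add, e1, e2]
      ring
    have h5 : q (c + 1) = g := by linear_combination h4
    rw [h5, hg, mul_comm]
  refine ⟨step, ?_⟩
  have W : ∀ c, c ≤ α - 1 → ∑ j ∈ Finset.range c, A j * X ^ (j * μ) = q c * X ^ (c * μ) := by
    intro c
    induction c with
    | zero => intro _; simp [hq0]
    | succ c ih =>
      intro hc
      rw [Finset.sum_range_succ, ih (by omega), add_mul c, one_mul, pow_add]
      linear_combination -(X ^ (c * μ)) * step c (by omega)
  obtain ⟨a, rfl⟩ : ∃ a, α = a + 1 := ⟨α - 1, by omega⟩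
  rw [Finset.sum_range_succ, Finset.sum_range_succ, W a (by omega)]
  simp only [Nat.add_sub_cancel] at hl
  obtain ⟨g, hg⟩ := hl
  refine ⟨g, ?_⟩
  have e : (X : K[X]) ^ ((a + 1) * μ + β) = X ^ (a * μ) * X ^ (μ + β) := by
    rw [← pow_add]; congr 1; ring
  rw [e, mul_assoc, ← hg, add_mul a, one_mul, pow_add]
  ring

lemma seq_deg (μ α : ℕ) (A q : ℕ → K[X]) (hq0 : q 0 = 0) (e : ℤ)
    (hA : ∀ c, DZ (A c) (e + μ))
    (h : ∀ c, c < α - 1 → q (c + 1) * X ^ μ = q c + A c) :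
    ∀ c, c ≤ α - 1 → DZ (q c) e := by
  intro c
  induction c with
  | zero => intro _; rw [hq0]; exact DZ.zero _
  | succ c ih =>
    intro hc
    apply DZ.of_mul_X_pow (e := μ)
    rw [h c (by omega)]
    exact ((ih (by omega)).mono (by omega)).add (hA c)

lemma seq_backward (μ α : ℕ) (A : ℕ → K[X]) (hA : ∀ c, DZ (A c) (2 * μ - 2))
    (hw : ∑ c ∈ Finset.range (α + 1), A c * X ^ (c * μ) = 0) :
    ∃ q : ℕ → K[X], q 0 = 0 ∧ (∀ c, c ≤ α → DZ (q c) (μ - 1)) ∧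
      ∀ c, c < α → X ^ (2 * μ) ∣ A c + A (c + 1) * X ^ μ + q c := by
  have hdvd : ∀ k, k ≤ α + 1 →
      (X : K[X]) ^ (k * μ) ∣ ∑ c ∈ Finset.range k, A c * X ^ (c * μ) := by
    intro k hk
    have h1 := Finset.sum_range_add_sum_Ico (fun c => A c * X ^ (c * μ)) hk
    rw [hw] at h1
    rw [eq_neg_of_add_eq_zero_left h1, dvd_neg]
    refine Finset.dvd_sum fun c hc => ?_
    rw [Finset.mem_Ico] at hc
    exact Dvd.dvd.mul_left (pow_dvd_pow X (Nat.mul_le_mul_right _ hc.1)) _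
  have hex : ∀ k, ∃ g : K[X], k ≤ α + 1 →
      ∑ c ∈ Finset.range k, A c * X ^ (c * μ) = X ^ (k * μ) * g := by
    intro k
    by_cases hk : k ≤ α + 1
    · obtain ⟨g, hg⟩ := hdvd k hk
      exact ⟨g, fun _ => hg⟩
    · exact ⟨0, fun h => absurd h hk⟩
  choose q hq using hex
  refine ⟨q, ?_, ?_, ?_⟩
  · have := hq 0 (by omega)
    simpa using this.symm
  · intro c hc
    apply DZ.of_mul_X_pow (e := c * μ)
    rw [mul_comm, ← hq c (by omega)]
    refine DZ.sum _ fun j hj => ?_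
    rw [Finset.mem_range] at hj
    refine ((hA j).mul_X_pow (j * μ)).mono ?_
    obtain ⟨b, rfl⟩ : ∃ b, c = j + 1 + b := ⟨c - (j + 1), by omega⟩
    push_cast
    nlinarith [mul_nonneg (Int.natCast_nonneg b) (Int.natCast_nonneg μ)]
  · intro c hc
    obtain ⟨g, hg⟩ := hdvd (c + 2) (by omega)
    refine ⟨g, ?_⟩
    have h0 : (X : K[X]) ^ (c * μ) ≠ 0 := pow_ne_zero _ Polynomial.X_ne_zero
    apply mul_left_cancel₀ h0
    rw [← mul_assoc, ← pow_add, show c * μ + 2 * μ = (c + 2) * μ by ring, ← hg,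
      Finset.sum_range_succ, Finset.sum_range_succ, hq c (by omega), add_mul c, one_mul, pow_add]
    ring

lemma coeff_ovlDigit (μ k : ℕ) (p : K[X]) (e : ℕ) :
    (ovlDigit μ k p).coeff e = if e < μ then p.coeff (k * μ + e) else 0 := by
  unfold ovlDigit
  rw [Polynomial.finsetSum_coeff]
  simp only [Polynomial.coeff_C_mul, Polynomial.coeff_X_pow, mul_ite, mul_one, mul_zero]
  rw [Finset.sum_ite_eq]
  simp

lemma DZ_ovlDigit (μ k : ℕ) (p : K[X]) : DZ (ovlDigit μ k p) (μ - 1) := by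
  intro e he
  rw [coeff_ovlDigit, if_neg (by omega)]

lemma ovlDigit_sum (μ α : ℕ) (hμ : 0 < μ) (f : K[X]) (hf : DZ f ((α + 1) * μ - 1)) :
    ∑ c ∈ Finset.range (α + 1), ovlDigit μ c f * X ^ (c * μ) = f := by
  ext k
  rw [Polynomial.finsetSum_coeff]
  simp only [Polynomial.coeff_mul_X_pow', coeff_ovlDigit]
  have hk := Nat.div_add_mod k μ
  have hk2 := Nat.mod_lt k hμ
  rw [Finset.sum_eq_single (k / μ)]
  · have e : k / μ * μ ≤ k := Nat.div_mul_le_self k μ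
    rw [mul_comm] at hk
    rw [if_pos e, if_pos (by omega)]
    congr 1; omega
  · intro b _ hb
    split_ifs with h1 h2
    · exfalso; apply hb
      symm
      rw [Nat.div_eq_iff hμ]
      omega
    · rfl
    · rfl
  · intro h
    rw [Finset.mem_range, not_lt, Nat.le_div_iff_mul_le hμ] at h
    split_ifs
    · rename_i h1 h2
      have : k / μ * μ + (k - k / μ * μ) = k := by omega
      rw [this]
      apply hf
      have : (((α + 1) * μ : ℕ) : ℤ) ≤ k := by exact_mod_cast h
      push_cast at this
      omega
    · rfl
    · rfl

end SeqHelpers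
section OvlHelpers

variable {K : Type*} [Field K] {m n : ℕ}

lemma ovl_decomp (μ : ℕ) (d : Fin n → ℕ) (i : Fin n) (hμ : 0 < μ) (hd0 : 0 < d i) :
    ovlα μ d i * μ + ovlβ μ d i = d i ∧ 1 ≤ ovlβ μ d i ∧ ovlβ μ d i ≤ μ := by
  have h1 : ovlα μ d i * μ ≤ d i - 1 := Nat.div_mul_le_self _ _
  have h2 := Nat.div_add_mod (d i - 1) μ
  have h3 := Nat.mod_lt (d i - 1) hμ
  have h4 : ovlα μ d i * μ = μ * ((d i - 1) / μ) := mul_comm _ _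
  unfold ovlβ
  omega

/-- The extra entry of `p` that acts on column `c` of block `i` (zero if there is none). -/
noncomputable def ovlQ (μ : ℕ) (d : Fin n → ℕ) (p : OvlRow m μ d → K[X]) (i : Fin n) (c : ℕ) :
    K[X] :=
  if h : 1 ≤ c ∧ c - 1 < ovlα μ d i - 1 then
    p (toLex (Sum.inr (toLex ⟨i, ⟨c - 1, h.2⟩⟩))) else 0

/-- `u` times the `c`-th digit of column `i`. -/
noncomputable def ovlA (μ : ℕ) (F : Matrix (Fin m) (Fin n) K[X]) (u : Fin m → K[X]) (i : Fin n)
    (c : ℕ) : K[X] := ∑ a, u a * ovlDigit μ c (F a i)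

lemma ovl_sum_row (μ : ℕ) (d : Fin n → ℕ) (f : OvlRow m μ d → K[X]) :
    ∑ r, f r = ∑ a, f (toLex (Sum.inl a)) + ∑ b, f (toLex (Sum.inr b)) := by
  rw [← Equiv.sum_comp (toLex : Fin m ⊕ OvlRowExtra μ d ≃ _) f, Fintype.sum_sum_type]

lemma ovl_sum_extra (μ : ℕ) (d : Fin n → ℕ) (p : OvlRow m μ d → K[X]) (i : Fin n)
    (k : ℕ) (hk : k < ovlγ μ d i) :
    ∑ b : OvlRowExtra μ d, p (toLex (Sum.inr b)) *
      (if (ofLex b).1 = i ∧ k = ((ofLex b).2 : ℕ) + 1 then (1 : K[X]) else 0)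
      = ovlQ μ d p i k := by
  unfold ovlQ
  split_ifs with h
  · rw [Finset.sum_eq_single (toLex ⟨i, ⟨k - 1, h.2⟩⟩ : OvlRowExtra μ d)]
    · rw [if_pos, mul_one]
      simp only [ofLex_toLex, true_and]
      omega
    · intro b _ hb
      rw [if_neg, mul_zero]
      rintro ⟨h1, h2⟩
      apply hb
      obtain ⟨j, e⟩ := b
      simp only [ofLex] at h1 h2
      change j = i at h1
      subst h1
      change k = (e : ℕ) + 1 at h2
      apply ofLex.injective
      change (⟨j, e⟩ : (i : Fin n) × Fin (ovlα μ d i - 1)) = ⟨j, _⟩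
      congr 1
      ext
      simp only
      omega
    · simp
  · refine Finset.sum_eq_zero fun b _ => ?_
    rw [if_neg, mul_zero]
    rintro ⟨h1, h2⟩
    apply h
    subst h1
    have := (ofLex b).2.2
    omega

lemma ovl_vecMul (μ : ℕ) (d : Fin n → ℕ) (F : Matrix (Fin m) (Fin n) K[X])
    (p : OvlRow m μ d → K[X]) (c : OvlCol μ d) :
    (p ᵥ* ovlL K μ d F) c =
      (if ovlα μ d (ofLex c).1 ≤ 1 then ∑ a, p (toLex (Sum.inl a)) * F a (ofLex c).1
       else ovlA μ F (fun a => p (toLex (Sum.inl a))) (ofLex c).1 (ofLex c).2 +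
        ovlA μ F (fun a => p (toLex (Sum.inl a))) (ofLex c).1 ((ofLex c).2 + 1) * X ^ μ) +
      ovlQ μ d p (ofLex c).1 (ofLex c).2 := by
  rw [Matrix.vecMul, dotProduct, ovl_sum_row]
  congr 1
  · split_ifs with h
    · refine Finset.sum_congr rfl fun a _ => ?_
      simp [ovlL, h]
    · unfold ovlA
      rw [Finset.sum_mul, ← Finset.sum_add_distrib]
      refine Finset.sum_congr rfl fun a _ => ?_
      simp only [ovlL, Matrix.of_apply, ofLex_toLex, Sum.elim_inl, if_neg h]
      ring
  · rw [← ovl_sum_extra μ d p _ _ (ofLex c).2.2]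
    rfl

lemma ovl_mem_app (μ : ℕ) (d : Fin n → ℕ) (F : Matrix (Fin m) (Fin n) K[X])
    (p : OvlRow m μ d → K[X]) :
    p ∈ appMod (ovlOrder μ d) (ovlL K μ d F) ↔
      ∀ i, (ovlα μ d i ≤ 1 → X ^ d i ∣ ∑ a, p (toLex (Sum.inl a)) * F a i) ∧
        (2 ≤ ovlα μ d i →
          (∀ c, c < ovlα μ d i - 1 → X ^ (2 * μ) ∣
            ovlA μ F (fun a => p (toLex (Sum.inl a))) i c +
            ovlA μ F (fun a => p (toLex (Sum.inl a))) i (c + 1) * X ^ μ + ovlQ μ d p i c) ∧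
          X ^ (μ + ovlβ μ d i) ∣
            ovlA μ F (fun a => p (toLex (Sum.inl a))) i (ovlα μ d i - 1) +
            ovlA μ F (fun a => p (toLex (Sum.inl a))) i (ovlα μ d i - 1 + 1) * X ^ μ +
            ovlQ μ d p i (ovlα μ d i - 1)) := by
  have h0 : p ∈ appMod (ovlOrder μ d) (ovlL K μ d F) ↔
      ∀ i, ∀ e : Fin (ovlγ μ d i), X ^ ovlOrder μ d (toLex ⟨i, e⟩) ∣
        (p ᵥ* ovlL K μ d F) (toLex ⟨i, e⟩) := by
    simp only [appMod, Submodule.mem_comap, Submodule.mem_pi, Set.mem_univ, true_imp_iff,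
      Ideal.mem_span_singleton, Matrix.vecMulLinear_apply]
    exact ⟨fun h i e => h _, fun h c => h (ofLex c).1 (ofLex c).2⟩
  rw [h0]
  refine forall_congr' fun i => ?_
  have hord : ∀ e : Fin (ovlγ μ d i), ovlOrder μ d (toLex ⟨i, e⟩) =
      if ovlα μ d i ≤ 1 then d i
      else if (e : ℕ) = ovlγ μ d i - 1 then μ + ovlβ μ d i else 2 * μ := fun e => rfl
  simp only [ovl_vecMul, ofLex_toLex, hord]
  by_cases hα : ovlα μ d i ≤ 1
  · have hγ : ovlγ μ d i = 1 := by unfold ovlγ; omega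
    simp only [hα, if_true, true_imp_iff, show ¬ 2 ≤ ovlα μ d i by omega, false_imp_iff,
      and_true]
    have hQ : ∀ e : ℕ, ovlQ μ d p i e = 0 := by
      intro e
      unfold ovlQ
      rw [dif_neg (by omega)]
    simp only [hQ, add_zero]
    exact ⟨fun h => h ⟨0, by omega⟩, fun h _ => h⟩
  · have hγ : ovlγ μ d i = ovlα μ d i := by unfold ovlγ; omega
    simp only [hα, if_false, false_imp_iff, true_and, show 2 ≤ ovlα μ d i by omega, true_imp_iff]
    constructor
    · intro h
      constructor
      · intro c hc
        have := h ⟨c, by omega⟩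
        rwa [if_neg (show ¬ c = ovlγ μ d i - 1 by omega)] at this
      · have := h ⟨ovlα μ d i - 1, by omega⟩
        rwa [if_pos (show ovlα μ d i - 1 = ovlγ μ d i - 1 by omega)] at this
    · rintro ⟨h1, h2⟩ ⟨c, hc⟩
      simp only
      split_ifs with h3
      · obtain rfl : c = ovlα μ d i - 1 := by omega
        exact h2
      · exact h1 c (by omega)

lemma ovl_mem_ker (F : Matrix (Fin m) (Fin n) K[X]) (u : Fin m → K[X]) :
    u ∈ leftKernel F ↔ ∀ i, ∑ a, u a * F a i = 0 := by
  unfold leftKernel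
  rw [LinearMap.mem_ker, Matrix.vecMulLinear_apply]
  exact ⟨fun h i => congrFun h i, fun h => funext h⟩

lemma ovlA_deg (μ : ℕ) (F : Matrix (Fin m) (Fin n) K[X]) (s : Fin m → ℕ) (hμs : ∀ i, s i < μ)
    (u : Fin m → K[X]) (e : ℤ) (hu : ∀ a, DZ (u a) (s a + e)) (i : Fin n) (c : ℕ) :
    DZ (ovlA μ F u i c) (2 * μ - 2 + e) := by
  refine DZ.sum _ fun a _ => ((hu a).mul (DZ_ovlDigit μ c (F a i))).mono ?_
  have := hμs a
  omega

lemma ovlA_sum (μ : ℕ) (hμ : 0 < μ) (d : Fin n → ℕ) (F : Matrix (Fin m) (Fin n) K[X])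
    (u : Fin m → K[X]) (i : Fin n) (hd0 : 0 < d i) (hF : ∀ a, DZ (F a i) (d i - 1)) :
    ∑ c ∈ Finset.range (ovlα μ d i + 1), ovlA μ F u i c * X ^ (c * μ) = ∑ a, u a * F a i := by
  unfold ovlA
  simp only [Finset.sum_mul]
  rw [Finset.sum_comm]
  refine Finset.sum_congr rfl fun a _ => ?_
  simp only [mul_assoc]
  rw [← Finset.mul_sum, ovlDigit_sum μ _ hμ]
  refine (hF a).mono ?_
  obtain ⟨h1, h2, h3⟩ := ovl_decomp μ d i hμ hd0
  have h4 : ((ovlα μ d i * μ + ovlβ μ d i : ℕ) : ℤ) = d i := by exact_mod_cast h1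
  push_cast at h4
  nlinarith

/-- Small approximants come from kernel vectors, and their extra entries are small. -/
lemma ovl_forward (μ : ℕ) (hμ : 0 < μ) (d : Fin n → ℕ) (hd0 : ∀ j, 0 < d j)
    (F : Matrix (Fin m) (Fin n) K[X]) (s : Fin m → ℕ) (hμs : ∀ i, s i < μ)
    (hF : ∀ a i, DZ (F a i) (d i - 1 - s a))
    (p : OvlRow m μ d → K[X]) (hp : p ∈ appMod (ovlOrder μ d) (ovlL K μ d F))
    (hu : ∀ a, DZ (p (toLex (Sum.inl a))) (s a))
    (hq : ∀ b, DZ (p (toLex (Sum.inr b))) (μ - 1)) :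
    (fun a => p (toLex (Sum.inl a))) ∈ leftKernel F ∧
    ∀ e : ℤ, (∀ a, DZ (p (toLex (Sum.inl a))) (s a + e)) →
      ∀ b, DZ (p (toLex (Sum.inr b))) (μ - 2 + e) := by
  rw [ovl_mem_app] at hp
  have hF' : ∀ a i, DZ (F a i) (d i - 1) := fun a i => (hF a i).mono (by omega)
  have hQ0 : ∀ i, ovlQ μ d p i 0 = 0 := fun i => by simp [ovlQ]
  have hQ : ∀ i c, DZ (ovlQ μ d p i c) (μ - 1) := by
    intro i c
    unfold ovlQ
    split_ifs
    · exact hq _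
    · exact DZ.zero _
  have hA : ∀ i c, DZ (ovlA μ F (fun a => p (toLex (Sum.inl a))) i c) (2 * μ - 2) := by
    intro i c
    have := ovlA_deg μ F s hμs (fun a => p (toLex (Sum.inl a))) 0 (by simpa using hu) i c
    simpa using this
  have hfw := fun i (hα : 2 ≤ ovlα μ d i) =>
    seq_forward μ (ovlα μ d i) (ovlβ μ d i) hα _ _ (hQ0 i) (hA i) (hQ i)
      ((hp i).2 hα).1 ((hp i).2 hα).2
  constructor
  · rw [ovl_mem_ker]
    intro i
    apply DZ.eq_zero_of_dvd (a := (d i : ℤ) - 1) (e := d i)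
    · refine DZ.sum _ fun a _ => ((hu a).mul (hF a i)).mono (by omega)
    · omega
    · by_cases hα : ovlα μ d i ≤ 1
      · exact (hp i).1 hα
      · have := (hfw i (by omega)).2
        rwa [(ovl_decomp μ d i hμ (hd0 i)).1, ovlA_sum μ hμ d F _ i (hd0 i) (hF' · i)] at this
  · intro e he b
    have hb := (ofLex b).2.2
    have h1 := seq_deg μ (ovlα μ d (ofLex b).1) _ _ (hQ0 (ofLex b).1) (μ - 2 + e)
      (fun c => (ovlA_deg μ F s hμs _ e he (ofLex b).1 c).mono (by omega))
      (hfw (ofLex b).1 (by omega)).1 ((ofLex b).2 + 1) (by omega)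
    unfold ovlQ at h1
    rw [dif_pos ⟨by omega, by omega⟩] at h1
    exact h1

/-- Small kernel vectors lift to small approximants. -/
lemma ovl_backward (μ : ℕ) (hμ : 0 < μ) (d : Fin n → ℕ) (hd0 : ∀ j, 0 < d j)
    (F : Matrix (Fin m) (Fin n) K[X]) (s : Fin m → ℕ) (hμs : ∀ i, s i < μ)
    (hF : ∀ a i, DZ (F a i) (d i - 1 - s a))
    (u : Fin m → K[X]) (hk : u ∈ leftKernel F) (hu : ∀ a, DZ (u a) (s a)) :
    ∃ p : OvlRow m μ d → K[X], p ∈ appMod (ovlOrder μ d) (ovlL K μ d F) ∧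
      (∀ a, p (toLex (Sum.inl a)) = u a) ∧ ∀ b, DZ (p (toLex (Sum.inr b))) (μ - 1) := by
  rw [ovl_mem_ker] at hk
  have hF' : ∀ a i, DZ (F a i) (d i - 1) := fun a i => (hF a i).mono (by omega)
  have hA : ∀ i c, DZ (ovlA μ F u i c) (2 * μ - 2) := by
    intro i c
    have := ovlA_deg μ F s hμs u 0 (by simpa using hu) i c
    simpa using this
  have hex := fun i => seq_backward μ (ovlα μ d i) (ovlA μ F u i) (hA i)
    (by rw [ovlA_sum μ hμ d F u i (hd0 i) (hF' · i), hk i])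
  choose Q hQ0 hQd hQ using hex
  let p : OvlRow m μ d → K[X] := fun r =>
    Sum.elim u (fun b : OvlRowExtra μ d => Q (ofLex b).1 ((ofLex b).2 + 1)) (ofLex r)
  have hpQ : ∀ i c, c ≤ ovlα μ d i - 1 → ovlQ μ d p i c = Q i c := by
    intro i c hc
    unfold ovlQ
    split_ifs with h
    · change Q i (c - 1 + 1) = Q i c
      rw [Nat.sub_add_cancel h.1]
    · obtain rfl : c = 0 := by omega
      rw [hQ0]
  refine ⟨p, ?_, fun a => rfl, ?_⟩
  · rw [ovl_mem_app]
    intro i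
    refine ⟨fun _ => ?_, fun hα => ⟨fun c hc => ?_, ?_⟩⟩
    · change X ^ d i ∣ ∑ a, u a * F a i
      rw [hk i]; exact dvd_zero _
    · rw [hpQ i c (by omega)]
      exact hQ i c (by omega)
    · rw [hpQ i _ le_rfl]
      have := (ovl_decomp μ d i hμ (hd0 i)).2.2
      exact (pow_dvd_pow X (by omega)).trans (hQ i (ovlα μ d i - 1) (by omega))
  · intro b
    have hb := (ofLex b).2.2
    exact hQd (ofLex b).1 ((ofLex b).2 + 1) (by omega)

lemma ovl_withBot_eq {x y : WithBot ℤ} (h : ∀ N : ℤ, x ≤ N ↔ y ≤ N) : x = y := by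
  cases x with
  | bot =>
    cases y with
    | bot => rfl
    | coe y =>
      have := (h (y - 1)).1 bot_le
      rw [WithBot.coe_le_coe] at this
      omega
  | coe x =>
    cases y with
    | bot =>
      have := (h (x - 1)).2 bot_le
      rw [WithBot.coe_le_coe] at this
      omega
    | coe y =>
      exact le_antisymm ((h y).2 le_rfl) ((h x).1 le_rfl)

lemma ovl_max_map {α β : Type*} [LinearOrder α] [LinearOrder β] (f : α ↪ β) (hf : StrictMono f)
    (S : Finset α) : (S.map f).max = S.max.map f := by
  classical
  induction S using Finset.induction with
  | empty => simp
  | insert a S _ ih =>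
    rw [Finset.map_insert, Finset.max_insert, Finset.max_insert, ih]
    exact ((WithBot.monotone_map_iff.2 hf.monotone).map_max (a := (a : WithBot α))).symm

end OvlHelpers
/-- Lemma 5.9: a `(−t)`-reduced basis `P` of the module of
approximants for the overlapping linearization of `F` contains, in its rows of
nonpositive `(−t)`-degree, a `(−s)`-reduced basis of `ker F` (given by the
first `m` columns of these rows); there are exactly `m − rank F` such rows,
and weak Popov forms are inherited. -/
theorem kernel_via_overlapping_linearization {K : Type*} [Field K] {m n : ℕ}
    (F : Matrix (Fin m) (Fin n) K[X]) (s : Fin m → ℕ)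
    (hker : ∃ (k' : ℕ) (B : Matrix (Fin k') (Fin m) K[X]),
      IsBasisOf B (leftKernel F) ∧
        ∀ i, rdeg (fun j => -(s j : ℤ)) B i ≤ ((0 : ℤ) : WithBot ℤ))
    (μ : ℕ) (hμ : 0 < μ) (hμs : ∀ i, s i < μ)
    (d : Fin n → ℕ) (hd0 : ∀ j, 0 < d j)
    (hd : ∀ j, cdeg (fun i => (s i : ℤ)) F j + 1 ≤ ((d j : ℤ) : WithBot ℤ))
    (P : Matrix (OvlRow m μ d) (OvlRow m μ d) K[X]) :
    let t : OvlRow m μ d → ℤ :=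
      fun c => Sum.elim (fun i : Fin m => (s i : ℤ)) (fun _ => (μ : ℤ) - 1) (ofLex c)
    IsBasisOf P (appMod (ovlOrder μ d) (ovlL K μ d F)) →
    IsReducedForm (fun c => -t c) P →
    let cond : OvlRow m μ d → Prop := fun r => rdeg (fun c => -t c) P r ≤ ((0 : ℤ) : WithBot ℤ)
    let Kmat : Matrix {r // cond r} (Fin m) K[X] :=
      Matrix.of fun r a => P r.1 (toLex (Sum.inl a))
    Nat.card {r // cond r} = m - F.rank ∧
    IsBasisOf Kmat (leftKernel F) ∧
    IsReducedForm (fun j => -(s j : ℤ)) Kmat ∧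
    (IsWeakPopov (fun c => -t c) P → IsWeakPopov (fun j => -(s j : ℤ)) Kmat) := by
  classical
  intro t hbasis hred cond Kmat
  have hF : ∀ a i, DZ (F a i) (d i - 1 - s a) := by
    intro a i
    have h1 : rdegRow (fun a => (s a : ℤ)) (fun a => F a i) ≤ (((d i : ℤ) - 1 : ℤ) : WithBot ℤ) := by
      have h2 := hd i
      change rdegRow (fun a => (s a : ℤ)) (fun a => F a i) + 1 ≤ _ at h2
      revert h2
      cases rdegRow (fun a => (s a : ℤ)) (fun a => F a i) with
      | bot => simp
      | coe x =>
        intro h2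
        have h3 : x + 1 ≤ (d i : ℤ) := by exact_mod_cast h2
        rw [WithBot.coe_le_coe]
        omega
    exact (rdegRow_le_iff _ _ _).1 h1 a
  have htl : ∀ a : Fin m, t (toLex (Sum.inl a)) = s a := fun a => rfl
  have htr : ∀ b, t (toLex (Sum.inr b)) = (μ : ℤ) - 1 := fun b => rfl
  -- degree bounds on rows, split into the two blocks
  have hsplit : ∀ (p : OvlRow m μ d → K[X]) (N : ℤ),
      rdegRow (fun c => -t c) p ≤ (N : WithBot ℤ) ↔
        (∀ a, DZ (p (toLex (Sum.inl a))) (s a + N)) ∧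
        ∀ b, DZ (p (toLex (Sum.inr b))) (μ - 1 + N) := by
    intro p N
    rw [rdegRow_le_iff]
    constructor
    · intro h
      refine ⟨fun a => (h (toLex (Sum.inl a))).mono ?_, fun b => (h (toLex (Sum.inr b))).mono ?_⟩
      · rw [htl]; omega
      · rw [htr]; omega
    · rintro ⟨h1, h2⟩ c
      rcases hc : ofLex c with a | b
      · obtain rfl : c = toLex (Sum.inl a) := hc
        exact (h1 a).mono (by rw [htl]; omega)
      · obtain rfl : c = toLex (Sum.inr b) := hc
        exact (h2 b).mono (by rw [htr]; omega)
  have hPmem : ∀ r, P r ∈ appMod (ovlOrder μ d) (ovlL K μ d F) := by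
    intro r
    rw [← hbasis.2]
    exact Submodule.subset_span ⟨r, rfl⟩
  have hfw : ∀ r : {r // cond r}, (Kmat r ∈ leftKernel F) ∧
      ∀ e : ℤ, (∀ a, DZ (Kmat r a) (s a + e)) →
        ∀ b, DZ (P r.1 (toLex (Sum.inr b))) (μ - 2 + e) := by
    intro r
    obtain ⟨h1, h2⟩ := (hsplit (P r.1) 0).1 r.2
    exact ovl_forward μ hμ d hd0 F s hμs hF (P r.1) (hPmem r.1)
      (fun a => (h1 a).mono (by omega)) (fun b => (h2 b).mono (by omega))
  have hsK : ∀ (r : {r // cond r}) (N : ℤ),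
      rdegRow (fun j => -(s j : ℤ)) (Kmat r) ≤ (N : WithBot ℤ) ↔
        ∀ a, DZ (Kmat r a) (s a + N) := by
    intro r N
    rw [rdegRow_le_iff]
    exact forall_congr' fun a => by rw [show N - -(s a : ℤ) = s a + N by ring]
  -- row degrees agree
  have hrd : ∀ r : {r // cond r},
      rdegRow (fun j => -(s j : ℤ)) (Kmat r) = rdegRow (fun c => -t c) (P r.1) := by
    intro r
    apply ovl_withBot_eq
    intro N
    rw [hsK, hsplit]
    constructor
    · intro h
      exact ⟨h, fun b => ((hfw r).2 N h b).mono (by omega)⟩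
    · exact fun h => h.1
  choose ρ hρ using reduced_rdeg hred
  have hρK : ∀ r : {r // cond r}, rdegRow (fun j => -(s j : ℤ)) (Kmat r) = (ρ r.1 : WithBot ℤ) :=
    fun r => (hrd r).trans (hρ r.1)
  have hsmall : ∀ (r : {r // cond r}) b, DZ (P r.1 (toLex (Sum.inr b))) (μ - 2 + ρ r.1) :=
    fun r => (hfw r).2 _ ((hsK r _).1 (hρK r).le)
  -- reducedness
  have hKred : IsReducedForm (fun j => -(s j : ℤ)) Kmat := by
    have h1 : LinearIndependent K fun r : {r // cond r} => lm (fun c => -t c) P r.1 :=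
      LinearIndependent.comp hred _ Subtype.val_injective
    let φ : (Fin m → K) →ₗ[K] (OvlRow m μ d → K) := LinearMap.pi fun c =>
      Sum.elim (fun a : Fin m => LinearMap.proj a) (fun _ => 0) (ofLex c)
    refine LinearIndependent.of_comp φ ?_
    convert h1 using 1
    funext r c
    rcases hc : ofLex c with a | b
    · obtain rfl : c = toLex (Sum.inl a) := hc
      have e1 : rdeg (fun j => -(s j : ℤ)) Kmat r = (ρ r.1 : WithBot ℤ) := hρK r
      change lm (fun j => -(s j : ℤ)) Kmat r a = lm (fun c => -t c) P r.1 (toLex (Sum.inl a))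
      simp only [lm, Matrix.of_apply, e1, hρ r.1]
      rfl
    · obtain rfl : c = toLex (Sum.inr b) := hc
      change (0 : K) = lm (fun c => -t c) P r.1 (toLex (Sum.inr b))
      simp only [lm, Matrix.of_apply, hρ r.1, WithBot.recBotCoe_coe]
      rw [coeffZ_of_DZ (hsmall r b)]
      rw [htr]; omega
  -- basis
  have hKbasis : IsBasisOf Kmat (leftKernel F) := by
    refine ⟨reduced_linearIndependent hKred, le_antisymm ?_ ?_⟩
    · rw [Submodule.span_le]
      rintro _ ⟨r, rfl⟩
      exact (hfw r).1
    · obtain ⟨k', B, hB, hBd⟩ := hker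
      rw [← hB.2, Submodule.span_le]
      rintro _ ⟨i, rfl⟩
      have hBi : B i ∈ leftKernel F := by
        rw [← hB.2]; exact Submodule.subset_span ⟨i, rfl⟩
      have hBu : ∀ a, DZ (B i a) (s a) := fun a =>
        ((rdegRow_le_iff _ _ _).1 (hBd i) a).mono (by omega)
      obtain ⟨p, hp, hpu, hpq⟩ := ovl_backward μ hμ d hd0 F s hμs hF (B i) hBi hBu
      have hpd : rdegRow (fun c => -t c) p ≤ ((0 : ℤ) : WithBot ℤ) := by
        rw [hsplit]
        exact ⟨fun a => by rw [hpu, add_zero]; exact hBu a,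
          fun b => by rw [add_zero]; exact hpq b⟩
      rw [← hbasis.2, Submodule.mem_span_range_iff_exists_fun] at hp
      obtain ⟨c, hc⟩ := hp
      have hcz : ∀ r, ¬ cond r → c r = 0 := by
        intro r hr
        by_contra h
        apply hr
        have h1 := predictable_degree hred ρ hρ c 0 (by
          rw [show ∑ i, c i • P i = p from hc]
          exact (rdegRow_le_iff _ _ _).1 hpd) r h
        change rdeg (fun c => -t c) P r ≤ _
        rw [hρ r, WithBot.coe_le_coe]
        omega
      have hBe : B i = ∑ r : {r // cond r}, c r.1 • Kmat r := by
        funext a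
        rw [← hpu a, ← hc, Finset.sum_apply, Finset.sum_apply]
        have e1 := Fintype.sum_subtype_add_sum_subtype cond (fun r => (c r • P r) (toLex (Sum.inl a)))
        have e2 : ∑ r : {r // ¬ cond r}, (c r.1 • P r.1) (toLex (Sum.inl a)) = 0 :=
          Finset.sum_eq_zero fun r _ => by rw [hcz r.1 r.2, zero_smul]; rfl
        rw [e2, add_zero] at e1
        exact e1.symm
      change B i ∈ _
      rw [hBe]
      exact Submodule.sum_mem _ fun r _ => Submodule.smul_mem _ _ (Submodule.subset_span ⟨r, rfl⟩)
  refine ⟨?_, hKbasis, hKred, ?_⟩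
  · rw [← ovl_finrank_ker, ← hKbasis.2, Nat.card_eq_fintype_card]
    exact (finrank_span_eq_card hKbasis.1).symm
  · intro hW
    let f : Fin m ↪ OvlRow m μ d := ⟨fun a => toLex (Sum.inl a), fun a b h => by
      simpa using h⟩
    have hf : StrictMono f := fun a b h => Sum.Lex.inl_lt_inl_iff.2 h
    have hpiv : ∀ r : {r // cond r}, piv (fun c => -t c) (P r.1) =
        (piv (fun j => -(s j : ℤ)) (Kmat r)).map f := by
      intro r
      unfold piv
      rw [← ovl_max_map f hf]
      congr 1
      ext c
      simp only [Finset.mem_filter, Finset.mem_univ, true_and, Finset.mem_map]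
      rcases hc : ofLex c with a | b
      · obtain rfl : c = toLex (Sum.inl a) := hc
        constructor
        · rintro ⟨h1, h2⟩
          exact ⟨a, ⟨h1, by rw [hrd]; exact h2⟩, rfl⟩
        · rintro ⟨a', ⟨h1, h2⟩, h3⟩
          obtain rfl : a' = a := f.injective h3
          exact ⟨h1, by rw [← hrd]; exact h2⟩
      · obtain rfl : c = toLex (Sum.inr b) := hc
        constructor
        · rintro ⟨h1, h2⟩
          exfalso
          have h3 := (degZ_le_iff _ _).2 (hsmall r b)
          have h4 : rdegRow (fun c => -t c) (P r.1) = (ρ r.1 : WithBot ℤ) := hρ r.1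
          rw [h4] at h2
          revert h2 h3
          cases degZ (P r.1 (toLex (Sum.inr b))) with
          | bot => simp
          | coe x =>
            rw [← WithBot.coe_add, WithBot.coe_inj, WithBot.coe_le_coe, htr]
            omega
        · rintro ⟨a', _, h3⟩
          exact absurd (congrArg ofLex h3) Sum.inl_ne_inr
    refine ⟨fun r h => hW.1 r.1 ?_, fun r r' hrr => ?_⟩
    · rw [hpiv, h]; rfl
    · have h1 : piv (fun c => -t c) (P r.1) < piv (fun c => -t c) (P r'.1) := hW.2 hrr
      rw [hpiv, hpiv] at h1
      exact (WithBot.monotone_map_iff.2 hf.monotone).reflect_lt h1
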